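/- Let n ≥ 2 be an integer and let G be the grid P_n □ P_3. If j is an integer such that 2 ≤ j ≤ n−2, then 3j+2 ∈ S_SC(G). -/

import Mathlib

/-!  Common definitions: oriented graphs, geodesic convexity, convexity number,
strong convexity spectrum, and grid graphs. -/

variable {V : Type*}

/-- A directed walk of length `k` from `u` to `v` along the arc relation `A`,
encoded by the function `f` listing its vertices. -/
def IsDirWalk (A : V → V → Prop) (k : ℕ) (f : ℕ → V) (u v : V) : Prop :=
  f 0 = u ∧ f k = v ∧ ∀ i, i < k → A (f i) (f (i + 1))

/-- There is a directed walk from `u` to `v`. -/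
def DirReachable (A : V → V → Prop) (u v : V) : Prop :=
  ∃ k f, IsDirWalk A k f u v

/-- A digraph (given by its arc relation) is strongly connected. -/
def StrongConnected (A : V → V → Prop) : Prop :=
  ∀ u v : V, DirReachable A u v

/-- A `uv`-geodesic: a directed walk from `u` to `v` of minimum possible length
(such a walk is automatically a directed path). -/
def IsGeodesic (A : V → V → Prop) (k : ℕ) (f : ℕ → V) (u v : V) : Prop :=
  IsDirWalk A k f u v ∧ ∀ k' f', IsDirWalk A k' f' u v → k ≤ k'

/-- A nonempty vertex set `C` is convex if every vertex lying on a geodesic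
between two vertices of `C` (in either direction) belongs to `C`. -/
def DConvex (A : V → V → Prop) (C : Set V) : Prop :=
  C.Nonempty ∧ ∀ u ∈ C, ∀ v ∈ C, ∀ k f, IsGeodesic A k f u v → ∀ i ≤ k, f i ∈ C

/-- `A` is an orientation of the simple graph `G`: every arc is along an edge,
every edge gets an arc, and no edge gets both directions. -/
def IsOrientation (G : SimpleGraph V) (A : V → V → Prop) : Prop :=
  (∀ x y, A x y → G.Adj x y) ∧ (∀ x y, G.Adj x y → A x y ∨ A y x) ∧
    (∀ x y, A x y → ¬ A y x)

/-- The convexity number of a digraph: the maximum cardinality of a proper convex set. -/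
noncomputable def convexityNumber [Fintype V] (A : V → V → Prop) : ℕ :=
  sSup {k | ∃ C : Set V, DConvex A C ∧ C ≠ Set.univ ∧ C.ncard = k}

/-- The strong convexity spectrum of a graph: the set of convexity numbers of
its strongly connected orientations. -/
def strongConvexitySpectrum [Fintype V] (G : SimpleGraph V) : Set ℕ :=
  {k | ∃ A : V → V → Prop, IsOrientation G A ∧ StrongConnected A ∧ convexityNumber A = k}

/-- The grid graph `P_n □ P_m`. -/
def gridGraph (n m : ℕ) : SimpleGraph (Fin n × Fin m) :=
  (SimpleGraph.pathGraph n).boxProd (SimpleGraph.pathGraph m)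

/-!
Write `k = j - 1`. Directing the edges of the grid like a checkerboard makes every unit square a
directed 4-cycle. Reverse three edges, `l₀b`, `pa₂` and `a₁a₂` in the figure, which shows the
columns `k`, …, `k + 3` and the rows `0`, `1`, `2` from bottom to top:
```
  ──→ l₂ ←── p  ←── a₂ ←── c₂ ──→
      │      ↑      ↑      ↑
      ↓      │      │      │
  ←── l₁ ──→ q  ←── a₁ ──→ c₁ ←──
      ↑      │      ↑      │
      │      ↓      │      ↓
  ──→ l₀ ──→ b  ──→ a₀ ←── c₀ ──→
```
Let `L` consist of the columns up to `k` together with `q` and `p`, so that `|L| = 3j + 2`. A walk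
leaves `L` only through `b` and returns only from `a₁` or `a₂`, and each such excursion is longer
than a walk inside `L` with the same ends; hence `L` is convex.

Conversely, let `C` be a proper convex set with at least two elements that is not contained in `L`.
By strong connectivity every vertex of `C` has an out-neighbour and an in-neighbour in `C`. As the
grid is bipartite, `C` contains every directed 4-cycle which it meets in two vertices, and so `C`
spreads along the squares. Starting outside `L`, this puts the cycle `q b a₀ a₁` into `C`; were `p`
in `C` too, `C` would be the whole grid. Without `p`, the squares to the left and to the right are
out of reach, and `C` is contained in the six vertices `b`, `q`, `a₀`, `a₁`, `c₀`, `c₁`.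
-/

open Function Relation

/-- Existence of a directed walk of length `k` from `u` to `v`, with its vertices forgotten. -/
def HasDirWalk (A : V → V → Prop) (k : ℕ) (u v : V) : Prop :=
  ∃ f, IsDirWalk A k f u v

section Walks

variable {A : V → V → Prop} {a b k : ℕ} {u v w : V}

theorem exists_isDirWalk_through_iff :
    (∃ f, IsDirWalk A (a + b) f u v ∧ f a = w) ↔ HasDirWalk A a u w ∧ HasDirWalk A b w v := by
  constructor
  · rintro ⟨f, ⟨hu, hv, hf⟩, hw⟩
    exact ⟨⟨f, hu, hw, fun i hi => hf i (by omega)⟩,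
      ⟨fun i => f (a + i), hw, hv, fun i hi => hf (a + i) (by omega)⟩⟩
  · rintro ⟨⟨f, hu, hfw, hf⟩, ⟨g, hgw, hv, hg⟩⟩
    have glue {i : ℕ} (hi : a ≤ i) : (if i ≤ a then f i else g (i - a)) = g (i - a) := by
      split_ifs with h
      · rw [le_antisymm h hi, Nat.sub_self, hfw, hgw]
      · rfl
    refine ⟨fun i => if i ≤ a then f i else g (i - a), ⟨by simpa using hu, ?_, fun i hi => ?_⟩,
      by simpa using hfw⟩
    · simpa using (glue (Nat.le_add_right a b)).trans (by simpa using hv)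
    · dsimp only
      rcases lt_or_ge i a with h | h
      · rw [if_pos h.le, if_pos (Nat.succ_le_of_lt h)]
        exact hf i h
      · rw [glue h, glue (i := i + 1) (by omega), Nat.sub_add_comm h]
        exact hg (i - a) (by omega)

theorem hasDirWalk_zero_iff : HasDirWalk A 0 u v ↔ u = v :=
  ⟨fun ⟨_, hu, hv, _⟩ => hu.symm.trans hv, fun h => ⟨fun _ => u, rfl, h, by simp⟩⟩

theorem hasDirWalk_one_iff : HasDirWalk A 1 u v ↔ A u v := by
  constructor
  · rintro ⟨f, rfl, rfl, hf⟩
    exact hf 0 one_pos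
  · exact fun h => ⟨fun i => if i = 0 then u else v, by simp, by simp, by simpa using h⟩

theorem hasDirWalk_add_iff :
    HasDirWalk A (a + b) u v ↔ ∃ w, HasDirWalk A a u w ∧ HasDirWalk A b w v := by
  simp only [← exists_isDirWalk_through_iff]
  exact ⟨fun ⟨f, hf⟩ => ⟨f a, f, hf, rfl⟩, fun ⟨_, f, hf, _⟩ => ⟨f, hf⟩⟩

theorem hasDirWalk_succ_iff : HasDirWalk A (k + 1) u v ↔ ∃ w, A u w ∧ HasDirWalk A k w v := by
  simp only [add_comm k, hasDirWalk_add_iff, hasDirWalk_one_iff]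

theorem hasDirWalk_succ_iff' : HasDirWalk A (k + 1) u v ↔ ∃ w, HasDirWalk A k u w ∧ A w v := by
  simp only [hasDirWalk_add_iff, hasDirWalk_one_iff]

theorem HasDirWalk.trans (h : HasDirWalk A a u w) (h' : HasDirWalk A b w v) :
    HasDirWalk A (a + b) u v :=
  hasDirWalk_add_iff.2 ⟨w, h, h'⟩

theorem exists_hasDirWalk_iff_reflTransGen : (∃ k, HasDirWalk A k u v) ↔ ReflTransGen A u v := by
  constructor
  · rintro ⟨k, h⟩
    induction k generalizing v with
    | zero => exact hasDirWalk_zero_iff.1 h ▸ .refl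
    | succ k ih =>
      obtain ⟨w, hw, hwv⟩ := hasDirWalk_succ_iff'.1 h
      exact (ih hw).tail hwv
  · intro h
    induction h with
    | refl => exact ⟨0, hasDirWalk_zero_iff.2 rfl⟩
    | tail _ hvw ih =>
      obtain ⟨k, hk⟩ := ih
      exact ⟨k + 1, hasDirWalk_succ_iff'.2 ⟨_, hk, hvw⟩⟩

theorem exists_shortest_hasDirWalk (h : ReflTransGen A u v) :
    ∃ k, HasDirWalk A k u v ∧ ∀ m, HasDirWalk A m u v → k ≤ m := by
  classical
  have h := exists_hasDirWalk_iff_reflTransGen.2 h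
  exact ⟨Nat.find h, Nat.find_spec h, fun m => Nat.find_min' h⟩

theorem HasDirWalk.even_add {c : V → ℕ} (hA : ∀ x y, A x y → Odd (c x + c y))
    (h : HasDirWalk A k u v) : Even (c u + c v + k) := by
  induction k generalizing v with
  | zero => exact hasDirWalk_zero_iff.1 h ▸ ⟨c u, rfl⟩
  | succ k ih =>
    obtain ⟨w, hw, hwv⟩ := hasDirWalk_succ_iff'.1 h
    have hw := ih hw
    have hwv := hA w v hwv
    grind

end Walks

section Convexity

variable {A : V → V → Prop} {C : Set V}

theorem dConvex_iff_hasDirWalk :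
    DConvex A C ↔ C.Nonempty ∧ ∀ u ∈ C, ∀ v ∈ C, ∀ w a b, HasDirWalk A a u w → HasDirWalk A b w v →
      (∀ m, HasDirWalk A m u v → a + b ≤ m) → w ∈ C := by
  refine and_congr_right fun _ => ⟨fun h u hu v hv w a b hw hwv hmin => ?_,
    fun h u hu v hv k f hf i hi => ?_⟩
  · obtain ⟨f, hf, rfl⟩ := exists_isDirWalk_through_iff.2 ⟨hw, hwv⟩
    exact h u hu v hv _ f ⟨hf, fun m g hg => hmin m ⟨g, hg⟩⟩ a (Nat.le_add_right a b)
  · obtain ⟨b, rfl⟩ := Nat.exists_eq_add_of_le hi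
    obtain ⟨hw, hwv⟩ := exists_isDirWalk_through_iff.1 ⟨f, hf.1, rfl⟩
    exact h u hu v hv _ i b hw hwv fun m ⟨g, hg⟩ => hf.2 m g hg

theorem DConvex.mem_of_hasDirWalk (hC : DConvex A C) {a b : ℕ} {u v w : V} (hu : u ∈ C)
    (hv : v ∈ C) (huw : HasDirWalk A a u w) (hwv : HasDirWalk A b w v)
    (hmin : ∀ m, HasDirWalk A m u v → a + b ≤ m) : w ∈ C :=
  (dConvex_iff_hasDirWalk.1 hC).2 u hu v hv w a b huw hwv hmin

theorem DConvex.exists_mem_arc_from (hC : DConvex A C) {x y : V} (hx : x ∈ C) (hy : y ∈ C)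
    (hxy : x ≠ y) (h : ReflTransGen A x y) : ∃ z ∈ C, A x z := by
  obtain ⟨k, hk, hmin⟩ := exists_shortest_hasDirWalk h
  cases k with
  | zero => exact absurd (hasDirWalk_zero_iff.1 hk) hxy
  | succ k =>
    obtain ⟨z, hxz, hzy⟩ := hasDirWalk_succ_iff.1 hk
    exact ⟨z, hC.mem_of_hasDirWalk hx hy (hasDirWalk_one_iff.2 hxz) hzy
      (add_comm 1 k ▸ hmin), hxz⟩

theorem DConvex.exists_mem_arc_to (hC : DConvex A C) {x y : V} (hx : x ∈ C) (hy : y ∈ C)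
    (hxy : x ≠ y) (h : ReflTransGen A x y) : ∃ z ∈ C, A z y := by
  obtain ⟨k, hk, hmin⟩ := exists_shortest_hasDirWalk h
  cases k with
  | zero => exact absurd (hasDirWalk_zero_iff.1 hk) hxy
  | succ k =>
    obtain ⟨z, hxz, hzy⟩ := hasDirWalk_succ_iff'.1 hk
    exact ⟨z, hC.mem_of_hasDirWalk hx hy hxz (hasDirWalk_one_iff.2 hzy) hmin, hzy⟩

theorem dConvex_setOf_mutuallyReachable (o : V) :
    DConvex A {x | ReflTransGen A o x ∧ ReflTransGen A x o} := by
  refine dConvex_iff_hasDirWalk.2 ⟨⟨o, .refl, .refl⟩, fun u hu v hv w a b huw hwv _ => ?_⟩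
  exact ⟨hu.1.trans (exists_hasDirWalk_iff_reflTransGen.1 ⟨a, huw⟩),
    (exists_hasDirWalk_iff_reflTransGen.1 ⟨b, hwv⟩).trans hv.2⟩

/-
The value `κ t` is a lower bound for the time spent outside `S` on reaching `t`, so that `hreturn`
replaces each excursion from `S` by a shorter walk.
-/
theorem dConvex_of_excursion_bound {S : Set V} (hS : S.Nonempty) (κ : V → ℕ)
    (hexit : ∀ x ∈ S, ∀ t ∉ S, A x t → κ t ≤ 1)
    (hstep : ∀ s ∉ S, ∀ t ∉ S, A s t → κ t ≤ κ s + 1)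
    (hreturn : ∀ x ∈ S, ∀ s ∉ S, A x s → ∀ t ∉ S, ∀ y ∈ S, A t y →
      ∃ m ≤ κ t, HasDirWalk A m x y) :
    DConvex A S := by
  have last_exit {u w : V} {a : ℕ} (hu : u ∈ S) (hw : w ∉ S) (huw : HasDirWalk A a u w) :
      ∃ i τ, i + τ = a ∧ κ w ≤ τ ∧ ∃ x ∈ S, ∃ s ∉ S, A x s ∧ HasDirWalk A i u x := by
    induction a generalizing w with
    | zero => exact absurd (hasDirWalk_zero_iff.1 huw ▸ hu) hw
    | succ a ih =>
      obtain ⟨z, huz, hzw⟩ := hasDirWalk_succ_iff'.1 huw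
      by_cases hz : z ∈ S
      · exact ⟨a, 1, rfl, hexit z hz w hw hzw, z, hz, w, hw, hzw, huz⟩
      · obtain ⟨i, τ, rfl, hτ, h⟩ := ih hz huz
        exact ⟨i, τ + 1, rfl, (hstep z hz w hw hzw).trans (by omega), h⟩
  have shortcut {x w v : V} {b τ : ℕ} (hx : x ∈ S) (hxS : ∃ s ∉ S, A x s) (hw : w ∉ S)
      (hv : v ∈ S) (hτ : κ w ≤ τ) (hwv : HasDirWalk A b w v) :
      ∃ m < τ + b, HasDirWalk A m x v := by
    induction b generalizing w τ with
    | zero => exact absurd (hasDirWalk_zero_iff.1 hwv ▸ hv) hw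
    | succ b ih =>
      obtain ⟨z, hwz, hzv⟩ := hasDirWalk_succ_iff.1 hwv
      by_cases hz : z ∈ S
      · obtain ⟨s, hs, hxs⟩ := hxS
        obtain ⟨m, hm, hxz⟩ := hreturn x hx s hs hxs w hw z hz hwz
        exact ⟨m + b, by omega, hxz.trans hzv⟩
      · obtain ⟨m, hm, h⟩ := ih (τ := τ + 1) hz ((hstep w hw z hz hwz).trans (by omega)) hzv
        exact ⟨m, by omega, h⟩
  refine dConvex_iff_hasDirWalk.2 ⟨hS, fun u hu v hv w a b huw hwv hmin => ?_⟩
  by_contra hw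
  obtain ⟨i, τ, rfl, hτ, x, hx, s, hs, hxs, hux⟩ := last_exit hu hw huw
  obtain ⟨m, hm, hxv⟩ := shortcut hx ⟨s, hs, hxs⟩ hw hv hτ hwv
  have := hmin _ (hux.trans hxv)
  omega

end Convexity

section Bipartite

variable {A : V → V → Prop} {c : V → ℕ} {C : Set V}

theorem DConvex.mem_of_arc_arc (hC : DConvex A C) (hc : ∀ x y, A x y → Odd (c x + c y))
    {u w v : V} (hu : u ∈ C) (hv : v ∈ C) (huw : A u w) (hwv : A w v) (huv : u ≠ v) : w ∈ C := by
  refine hC.mem_of_hasDirWalk hu hv (hasDirWalk_one_iff.2 huw) (hasDirWalk_one_iff.2 hwv)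
    fun m hm => ?_
  have hm0 : m ≠ 0 := by
    rintro rfl
    exact huv (hasDirWalk_zero_iff.1 hm)
  have hpar := hm.even_add hc
  have huw := hc u w huw
  have hwv := hc w v hwv
  grind

theorem DConvex.mem_of_arc_arc_arc (hC : DConvex A C) (hc : ∀ x y, A x y → Odd (c x + c y))
    {u w x v : V} (hu : u ∈ C) (hv : v ∈ C) (huw : A u w) (hwx : A w x) (hxv : A x v)
    (huv : ¬ A u v) : w ∈ C ∧ x ∈ C := by
  have hw := hasDirWalk_one_iff.2 huw
  have hx := hasDirWalk_one_iff.2 hxv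
  have hmin : ∀ m, HasDirWalk A m u v → 3 ≤ m := fun m hm => by
    have hm1 : m ≠ 1 := by
      rintro rfl
      exact huv (hasDirWalk_one_iff.1 hm)
    have hpar := hm.even_add hc
    have huw := hc u w huw
    have hwx := hc w x hwx
    have hxv := hc x v hxv
    grind
  exact ⟨hC.mem_of_hasDirWalk hu hv hw (hasDirWalk_succ_iff.2 ⟨x, hwx, hx⟩) hmin,
    hC.mem_of_hasDirWalk hu hv (hasDirWalk_succ_iff'.2 ⟨w, hw, hwx⟩) hx hmin⟩

theorem DConvex.four_cycle_subset (hC : DConvex A C) (hc : ∀ x y, A x y → Odd (c x + c y))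
    (hA : ∀ x y, A x y → ¬ A y x) {s t u v : V} (hst : A s t) (htu : A t u) (huv : A u v)
    (hvs : A v s) (h : (C ∩ {s, t, u, v}).Nontrivial) : {s, t, u, v} ⊆ C := by
  have close {s t u v : V} (hst : A s t) (htu : A t u) (huv : A u v) (hvs : A v s)
      (hs : s ∈ C) (ht : t ∈ C) : u ∈ C ∧ v ∈ C :=
    hC.mem_of_arc_arc_arc hc ht hs htu huv hvs (hA s t hst)
  have close_s := close hst htu huv hvs
  have close_t := close htu huv hvs hst
  have close_u := close huv hvs hst htu
  have close_v := close hvs hst htu huv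
  have skip_t (hs : s ∈ C) (hu : u ∈ C) : t ∈ C :=
    hC.mem_of_arc_arc hc hs hu hst htu (by rintro rfl; exact hA _ _ hst htu)
  have skip_u (ht : t ∈ C) (hv : v ∈ C) : u ∈ C :=
    hC.mem_of_arc_arc hc ht hv htu huv (by rintro rfl; exact hA _ _ htu huv)
  obtain ⟨x, ⟨hx, hx'⟩, y, ⟨hy, hy'⟩, hxy⟩ := h
  simp only [Set.mem_insert_iff, Set.mem_singleton_iff, Set.insert_subset_iff,
    Set.singleton_subset_iff] at *
  rcases hx' with rfl | rfl | rfl | rfl <;> rcases hy' with rfl | rfl | rfl | rfl <;> grind only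

end Bipartite

section Embedding

variable {W : Type*} {e : V → W} {B : W → W → Prop}

theorem hasDirWalk_onFun_iff (he : Injective e) (hB : ∀ x y, B x y → y ∈ Set.range e)
    {k : ℕ} {u v : V} : HasDirWalk (B on e) k u v ↔ HasDirWalk B k (e u) (e v) := by
  induction k generalizing u with
  | zero => simp only [hasDirWalk_zero_iff, he.eq_iff]
  | succ k ih =>
    simp only [hasDirWalk_succ_iff, ih, onFun]
    constructor
    · rintro ⟨w, huw, hwv⟩
      exact ⟨e w, huw, hwv⟩
    · rintro ⟨x, hux, hxv⟩
      obtain ⟨w, rfl⟩ := hB _ _ hux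
      exact ⟨w, hux, hxv⟩

theorem HasDirWalk.mem_of_forall_arc {S : Set W} (hB : ∀ x y, B x y → y ∈ S) {k : ℕ} {u v : W}
    (hu : u ∈ S) (h : HasDirWalk B k u v) : v ∈ S := by
  cases k with
  | zero => exact hasDirWalk_zero_iff.1 h ▸ hu
  | succ k =>
    obtain ⟨w, -, hwv⟩ := hasDirWalk_succ_iff'.1 h
    exact hB w v hwv

theorem dConvex_onFun_iff (he : Injective e) (hB : ∀ x y, B x y → y ∈ Set.range e) {C : Set V} :
    DConvex (B on e) C ↔ DConvex B (e '' C) := by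
  simp only [dConvex_iff_hasDirWalk, Set.image_nonempty, Set.forall_mem_image,
    hasDirWalk_onFun_iff he hB]
  refine and_congr_right fun _ => forall₂_congr fun u _ => forall₂_congr fun v _ =>
    ⟨fun h w a b huw => ?_, fun h w a b huw hwv hmin =>
      (he.mem_set_image).1 (h (e w) a b huw hwv hmin)⟩
  obtain ⟨w, rfl⟩ := huw.mem_of_forall_arc hB ⟨u, rfl⟩
  exact fun hwv hmin => Set.mem_image_of_mem e (h w a b huw hwv hmin)

theorem ncard_mem_strongConvexitySpectrum [Fintype V] {G : SimpleGraph V} (he : Injective e)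
    (hB : ∀ x y, B x y → y ∈ Set.range e) (hG : IsOrientation G (B on e))
    (hconn : ∀ x ∈ Set.range e, ∀ y ∈ Set.range e, ReflTransGen B x y) {S : Set W}
    (hS : DConvex B S) (hSe : S ⊂ Set.range e)
    (hmax : ∀ C ⊂ Set.range e, DConvex B C → C.ncard ≤ S.ncard) :
    S.ncard ∈ strongConvexitySpectrum G := by
  refine ⟨B on e, hG, fun u v => ?_, IsGreatest.csSup_eq ⟨?_, ?_⟩⟩
  · obtain ⟨k, hk⟩ := exists_hasDirWalk_iff_reflTransGen.2 (hconn (e u) ⟨u, rfl⟩ (e v) ⟨v, rfl⟩)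
    exact ⟨k, (hasDirWalk_onFun_iff he hB).2 hk⟩
  · obtain ⟨S, rfl⟩ := Set.subset_range_iff_exists_image_eq.1 hSe.subset
    refine ⟨S, (dConvex_onFun_iff he hB).2 hS, ?_, (Set.ncard_image_of_injective S he).symm⟩
    rintro rfl
    exact hSe.ne Set.image_univ
  · rintro _ ⟨C, hC, hCne, rfl⟩
    rw [← Set.ncard_image_of_injective C he]
    refine hmax _ ((Set.image_subset_range e C).ssubset_of_ne fun h => hCne ?_)
      ((dConvex_onFun_iff he hB).1 hC)
    exact he.image_injective (h.trans Set.image_univ.symm)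

end Embedding

/-- The vertices of the `n × m` grid, as pairs of natural numbers. -/
def gridPoints (n m : ℕ) : Set (ℕ × ℕ) := Set.Iio n ×ˢ Set.Iio m

/-- The orientation of the `n × m` grid given by the set `R` of the points whose horizontal edge to
the right is directed to the right and the set `U` of those whose vertical edge upwards is directed
upwards. -/
def GridArc (n m : ℕ) (R U : Set (ℕ × ℕ)) (x y : ℕ × ℕ) : Prop :=
  x ∈ gridPoints n m ∧ y ∈ gridPoints n m ∧
    (y = (x.1 + 1, x.2) ∧ x ∈ R ∨ x = (y.1 + 1, y.2) ∧ y ∉ R ∨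
      y = (x.1, x.2 + 1) ∧ x ∈ U ∨ x = (y.1, y.2 + 1) ∧ y ∉ U)

/-- The unit square with lower left corner `(i, r)`. -/
def face (i r : ℕ) : Set (ℕ × ℕ) := {(i, r), (i + 1, r), (i + 1, r + 1), (i, r + 1)}

section Grid

variable {n m : ℕ} {x y : ℕ × ℕ} {R U : Set (ℕ × ℕ)}

theorem mem_gridPoints : x ∈ gridPoints n m ↔ x.1 < n ∧ x.2 < m := Iff.rfl

theorem range_prodMap_finVal : Set.range (Prod.map Fin.val Fin.val : Fin n × Fin m → ℕ × ℕ) =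
    gridPoints n m := by
  rw [Set.range_prodMap, Fin.range_val, Fin.range_val, gridPoints]

theorem GridArc.odd_add (h : GridArc n m R U x y) : Odd (x.1 + x.2 + (y.1 + y.2)) := by
  obtain ⟨-, -, ⟨rfl, -⟩ | ⟨rfl, -⟩ | ⟨rfl, -⟩ | ⟨rfl, -⟩⟩ := h <;> grind

theorem GridArc.asymm (h : GridArc n m R U x y) : ¬ GridArc n m R U y x := by
  obtain ⟨-, -, ⟨rfl, _⟩ | ⟨rfl, _⟩ | ⟨rfl, _⟩ | ⟨rfl, _⟩⟩ := h <;> grind [GridArc]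

theorem GridArc.ne (h : GridArc n m R U x y) : x ≠ y :=
  fun hxy => by subst hxy; exact h.asymm h

theorem isOrientation_gridArc :
    IsOrientation (gridGraph n m) (GridArc n m R U on Prod.map Fin.val Fin.val) := by
  refine ⟨?_, ?_, fun _ _ => GridArc.asymm⟩ <;> rintro ⟨⟨i, hi⟩, ⟨r, hr⟩⟩ ⟨⟨i', hi'⟩, ⟨r', hr'⟩⟩ <;>
    simp only [gridGraph, SimpleGraph.boxProd_adj, SimpleGraph.pathGraph_adj, Fin.mk.injEq, onFun,
      Prod.map_apply, GridArc, mem_gridPoints, Prod.mk.injEq] <;> grind (splits := 20)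

theorem GridArc.exists_mem_face (h : GridArc n 3 R U x y) {a b : ℕ} (hab : a < b)
    (hx : x.1 ∈ Set.Icc a b) (hy : y.1 ∈ Set.Icc a b) :
    ∃ i ∈ Set.Ico a b, ∃ r < 2, x ∈ face i r ∧ y ∈ face i r := by
  obtain ⟨i, r⟩ := x
  obtain ⟨i', r'⟩ := y
  refine ⟨min (min i i') (b - 1), by grind, min (min r r') 1, by omega, ?_⟩
  simp only [GridArc, mem_gridPoints, face, Set.mem_insert_iff, Set.mem_singleton_iff, Set.mem_Icc,
    Prod.mk.injEq] at *
  omega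

end Grid

/-- The points whose edge to the right is directed to the right in the orientation `SeamArc`: a
checkerboard with the edges at `l₀ = (k, 0)` and `p = (k + 1, 2)` reversed. -/
def seamRight (k : ℕ) : Set (ℕ × ℕ) := insert (k, 0) ({x | Odd (x.1 + x.2 + k)} \ {(k + 1, 2)})

/-- The points whose edge upwards is directed upwards in the orientation `SeamArc`: a checkerboard
with the edge at `a₁ = (k + 2, 1)` reversed. -/
def seamUp (k : ℕ) : Set (ℕ × ℕ) := insert (k + 2, 1) {x | Even (x.1 + x.2 + k)}

/-- The orientation of the `n × 3` grid with a seam to the right of the column `k`. In the names of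
hypotheses, `l`, `a` and `c` stand for vertices of the columns `k`, `k + 2` and `k + 3`, indexed by
their rows, and `b`, `q`, `p` for the vertices of the column `k + 1` from bottom to top. -/
def SeamArc (n k : ℕ) : ℕ × ℕ → ℕ × ℕ → Prop := GridArc n 3 (seamRight k) (seamUp k)

/-- The lower left corners of the unit squares that are directed 4-cycles of `SeamArc n k`. -/
def cyclicFaces (k : ℕ) : Set (ℕ × ℕ) :=
  {x | x.1 < k ∨ k + 3 ≤ x.1 ∨ x ∈ ({(k, 1), (k + 1, 0), (k + 2, 0)} : Set (ℕ × ℕ))}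

/-- The convex set of maximum cardinality of `SeamArc n k`: the columns up to `k` and the upper two
vertices of the column `k + 1`. -/
def leftPart (k : ℕ) : Set (ℕ × ℕ) := Set.Iic k ×ˢ Set.Iio 3 ∪ {(k + 1, 1), (k + 1, 2)}

section LeftPart

variable {n k : ℕ}

theorem mem_leftPart_mk {i r : ℕ} :
    (i, r) ∈ leftPart k ↔ i ≤ k ∧ r < 3 ∨ i = k + 1 ∧ r = 1 ∨ i = k + 1 ∧ r = 2 := by
  simp only [leftPart, Set.mem_union, Set.mem_prod, Set.mem_Iic, Set.mem_Iio, Set.mem_insert_iff,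
    Set.mem_singleton_iff, Prod.mk.injEq]

theorem finite_leftPart : (leftPart k).Finite :=
  ((Set.finite_Iic k).prod (Set.finite_Iio 3)).union (Set.toFinite _)

theorem ncard_leftPart : (leftPart k).ncard = 3 * (k + 1) + 2 := by
  have hdisj : Disjoint (Set.Iic k ×ˢ Set.Iio 3) {(k + 1, 1), (k + 1, 2)} := by
    simp [Set.disjoint_left]
    omega
  rw [leftPart, Set.ncard_union_eq hdisj ((Set.finite_Iic k).prod (Set.finite_Iio 3)),
    Set.ncard_prod, Set.ncard_pair (by simp)]
  simp [Set.ncard_eq_toFinset_card', mul_comm]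

theorem leftPart_ssubset_gridPoints (hn : k + 3 ≤ n) : leftPart k ⊂ gridPoints n 3 := by
  refine ⟨fun ⟨i, r⟩ hx => ?_, fun h => ?_⟩
  · rw [mem_leftPart_mk] at hx
    rw [mem_gridPoints]
    omega
  · have := h (show (k + 2, 0) ∈ gridPoints n 3 from mem_gridPoints.2 ⟨hn, three_pos⟩)
    rw [mem_leftPart_mk] at this
    omega

end LeftPart

namespace SeamArc

variable {n k : ℕ} {x y : ℕ × ℕ} {C : Set (ℕ × ℕ)}

theorem mk_iff {i r i' r' : ℕ} : SeamArc n k (i, r) (i', r') ↔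
    (i < n ∧ r < 3) ∧ (i' < n ∧ r' < 3) ∧
    ((i' = i + 1 ∧ r' = r) ∧ (i = k ∧ r = 0 ∨ (i + r + k) % 2 = 1 ∧ ¬(i = k + 1 ∧ r = 2)) ∨
      (i = i' + 1 ∧ r = r') ∧
        ¬(i' = k ∧ r' = 0 ∨ (i' + r' + k) % 2 = 1 ∧ ¬(i' = k + 1 ∧ r' = 2)) ∨
      (i' = i ∧ r' = r + 1) ∧ (i = k + 2 ∧ r = 1 ∨ (i + r + k) % 2 = 0) ∨
      (i = i' ∧ r = r' + 1) ∧ ¬(i' = k + 2 ∧ r' = 1 ∨ (i' + r' + k) % 2 = 0)) := by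
  simp only [SeamArc, GridArc, mem_gridPoints, seamRight, seamUp, Prod.mk.injEq,
    Set.mem_insert_iff, Set.mem_sdiff, Set.mem_singleton_iff, Set.mem_ofPred_eq, Nat.odd_iff,
    Nat.even_iff]

theorem face_subset (hC : DConvex (SeamArc n k) C) {i r : ℕ} (hi : i + 1 < n)
    (hr : r < 2) (hcyc : (i, r) ∈ cyclicFaces k) (h : (C ∩ face i r).Nontrivial) :
    face i r ⊆ C := by
  have hodd (x y : ℕ × ℕ) (h : SeamArc n k x y) : Odd (x.1 + x.2 + (y.1 + y.2)) := h.odd_add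
  have hasymm (x y : ℕ × ℕ) (h : SeamArc n k x y) : ¬ SeamArc n k y x := h.asymm
  have hcyc : i < k ∨ k + 3 ≤ i ∨ i = k ∧ r = 1 ∨ i = k + 1 ∧ r = 0 ∨ i = k + 2 ∧ r = 0 := by
    simpa [cyclicFaces] using hcyc
  have hrev : face i r = {(i, r), (i, r + 1), (i + 1, r + 1), (i + 1, r)} := by
    ext; simp only [face, Set.mem_insert_iff, Set.mem_singleton_iff]; tauto
  rcases Nat.mod_two_eq_zero_or_one (i + r + k) with hpar | hpar
  · rw [hrev] at h ⊢
    apply hC.four_cycle_subset hodd hasymm _ _ _ _ h <;> rw [mk_iff] <;> omega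
  · apply hC.four_cycle_subset hodd hasymm _ _ _ _ h <;> rw [mk_iff] <;> omega

theorem strip_subset (hC : DConvex (SeamArc n k) C) {a b : ℕ} (hb : b < n)
    (hcyc : Set.Ico a b ×ˢ Set.Iio 2 ⊆ cyclicFaces k) (hx : x ∈ C) (hy : y ∈ C)
    (hxy : SeamArc n k x y) (hab : a < b) (hxab : x.1 ∈ Set.Icc a b) (hyab : y.1 ∈ Set.Icc a b) :
    Set.Icc a b ×ˢ Set.Iio 3 ⊆ C := by
  have hface {i r : ℕ} (hi : i ∈ Set.Ico a b) (hr : r < 2) :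
      (C ∩ face i r).Nontrivial → face i r ⊆ C :=
    face_subset hC (by grind) hr (hcyc ⟨hi, hr⟩)
  have hcolumns {i r : ℕ} (hi : i ∈ Set.Ico a b) (hr : r < 2) (h : (C ∩ face i r).Nontrivial) :
      ∀ s < 3, (i, s) ∈ C ∧ (i + 1, s) ∈ C := by
    have h := hface hi hr h
    have h' : face i (1 - r) ⊆ C := by
      refine hface hi (by omega) ⟨(i, 1), ⟨h ?_, ?_⟩, (i + 1, 1), ⟨h ?_, ?_⟩, ?_⟩ <;>
        simp [face] <;> omega
    intro s hs
    rcases (by omega : s = r ∨ s = r + 1 ∨ s = 1 - r ∨ s = 1 - r + 1) with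
      rfl | rfl | rfl | rfl
    · exact ⟨h (by simp [face]), h (by simp [face])⟩
    · exact ⟨h (by simp [face]), h (by simp [face])⟩
    · exact ⟨h' (by simp [face]), h' (by simp [face])⟩
    · exact ⟨h' (by simp [face]), h' (by simp [face])⟩
  have hshift {i : ℕ} (hi : i ∈ Set.Ico a b) :
      (∀ s < 3, (i, s) ∈ C) ↔ ∀ s < 3, (i + 1, s) ∈ C := by
    refine ⟨fun h s hs => ?_, fun h s hs => ?_⟩
    · exact (hcolumns hi two_pos ⟨(i, 0), ⟨h 0 (by simp), by simp [face]⟩,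
        (i, 1), ⟨h 1 (by simp), by simp [face]⟩, by simp⟩ s hs).2
    · exact (hcolumns hi two_pos ⟨(i + 1, 0), ⟨h 0 (by simp), by simp [face]⟩,
        (i + 1, 1), ⟨h 1 (by simp), by simp [face]⟩, by simp⟩ s hs).1
  have hfirst {i : ℕ} (hai : a ≤ i) : i ≤ b → ((∀ s < 3, (a, s) ∈ C) ↔ ∀ s < 3, (i, s) ∈ C) := by
    induction i, hai using Nat.le_induction with
    | base => exact fun _ => Iff.rfl
    | succ i hai ih => exact fun hib => (ih (by omega)).trans (hshift ⟨hai, hib⟩)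
  obtain ⟨i, hi, r, hr, hxf, hyf⟩ := hxy.exists_mem_face hab hxab hyab
  have hstart := hcolumns hi hr ⟨x, ⟨hx, hxf⟩, y, ⟨hy, hyf⟩, hxy.ne⟩
  have ha := (hfirst hi.1 hi.2.le).2 fun s hs => (hstart s hs).1
  exact fun z hz => (hfirst hz.1.1 hz.1.2).1 ha z.2 hz.2

theorem left_subset (hC : DConvex (SeamArc n k) C) (hk : 0 < k) (hn : k < n) (hx : x ∈ C)
    (hy : y ∈ C) (hxy : SeamArc n k x y) (hxk : x.1 ≤ k) (hyk : y.1 ≤ k) :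
    Set.Iic k ×ˢ Set.Iio 3 ⊆ C := by
  have h := strip_subset hC (a := 0) hn (fun z hz => .inl hz.1.2) hx hy hxy hk
    ⟨Nat.zero_le _, hxk⟩ ⟨Nat.zero_le _, hyk⟩
  exact fun z hz => h ⟨⟨Nat.zero_le _, hz.1⟩, hz.2⟩

theorem right_subset (hC : DConvex (SeamArc n k) C) (hn : k + 5 ≤ n) (hx : x ∈ C) (hy : y ∈ C)
    (hxy : SeamArc n k x y) (hxk : k + 3 ≤ x.1) (hyk : k + 3 ≤ y.1) :
    Set.Ico (k + 3) n ×ˢ Set.Iio 3 ⊆ C := by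
  have h := strip_subset hC (a := k + 3) (b := n - 1) (by omega) (fun z hz => .inr (.inl hz.1.1))
    hx hy hxy (by omega) ⟨hxk, Nat.le_sub_one_of_lt hxy.1.1⟩ ⟨hyk, Nat.le_sub_one_of_lt hxy.2.1.1⟩
  exact fun z hz => h ⟨⟨hz.1.1, Nat.le_sub_one_of_lt hz.1.2⟩, hz.2⟩

theorem seam_columns_subset (hC : DConvex (SeamArc n k) C) (hk : 0 < k) (hn : k + 3 ≤ n)
    (hq : (k + 1, 1) ∈ C) (hp : (k + 1, 2) ∈ C) (ha₁ : (k + 2, 1) ∈ C) :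
    Set.Iic (k + 2) ×ˢ Set.Iio 3 ⊆ C := by
  have hl : face k 1 ⊆ C := by
    refine face_subset hC (by omega) one_lt_two ?_ ⟨(k + 1, 1), ⟨hq, ?_⟩, (k + 1, 2), ⟨hp, ?_⟩, ?_⟩
    all_goals simp [cyclicFaces, face]
  have hleft : Set.Iic k ×ˢ Set.Iio 3 ⊆ C :=
    left_subset hC hk (by omega) (x := (k, 2)) (y := (k, 1)) (hl (by simp [face]))
      (hl (by simp [face])) (by rw [mk_iff]; omega) le_rfl le_rfl
  have hba : face (k + 1) 0 ⊆ C := by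
    refine face_subset hC (by omega) two_pos ?_ ⟨(k + 1, 1), ⟨hq, ?_⟩, (k + 2, 1), ⟨ha₁, ?_⟩, ?_⟩
    all_goals simp [cyclicFaces, face]
  have hb : (k + 1, 0) ∈ C := hba (by simp [face])
  have ha₀ : (k + 2, 0) ∈ C := hba (by simp [face])
  have ha₂ : (k + 2, 2) ∈ C := by
    refine hC.mem_of_arc_arc (fun _ _ => GridArc.odd_add) ha₁ hp ?_ ?_ (by simp) <;>
      rw [mk_iff] <;> omega
  rintro ⟨i, r⟩ ⟨hi : i ≤ k + 2, hr : r < 3⟩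
  obtain h | rfl | rfl : i ≤ k ∨ i = k + 1 ∨ i = k + 2 := by omega
  · exact hleft ⟨h, hr⟩
  · interval_cases r <;> assumption
  · interval_cases r <;> assumption

theorem gridPoints_subset (hC : DConvex (SeamArc n k) C) (hk : 0 < k) (hn : k + 3 ≤ n)
    (hq : (k + 1, 1) ∈ C) (hp : (k + 1, 2) ∈ C) (ha₁ : (k + 2, 1) ∈ C) : gridPoints n 3 ⊆ C := by
  have hseam := seam_columns_subset hC hk hn hq hp ha₁
  have hright : Set.Ico (k + 3) n ×ˢ Set.Iio 3 ⊆ C := by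
    rcases hn.eq_or_lt with rfl | hn
    · simp
    have hc : face (k + 2) 0 ⊆ C := by
      refine face_subset hC hn two_pos ?_ ⟨(k + 2, 0), ⟨hseam ?_, ?_⟩, (k + 2, 1), ⟨ha₁, ?_⟩, ?_⟩
      all_goals simp [cyclicFaces, face]
    have hc₀ : (k + 3, 0) ∈ C := hc (by simp [face])
    have hc₁ : (k + 3, 1) ∈ C := hc (by simp [face])
    have hc₂ : (k + 3, 2) ∈ C := by
      have ha₂ : (k + 2, 2) ∈ C := hseam (by simp)
      refine hC.mem_of_arc_arc (fun _ _ => GridArc.odd_add) hc₁ ha₂ ?_ ?_ (by simp) <;>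
        rw [mk_iff] <;> omega
    rcases (Nat.succ_le_of_lt hn).eq_or_lt with rfl | hn
    · rintro ⟨i, r⟩ ⟨hi, hr : r < 3⟩
      obtain rfl : i = k + 3 := by grind
      interval_cases r <;> assumption
    · exact right_subset hC hn hc₁ hc₀ (by rw [mk_iff]; omega) le_rfl le_rfl
  intro x hx
  rcases lt_or_ge x.1 (k + 3) with h | h
  · exact hseam ⟨Nat.le_of_lt_succ h, hx.2⟩
  · exact hright ⟨⟨h, hx.1⟩, hx.2⟩

theorem reflTransGen (hk : 0 < k) (hn : k + 3 ≤ n) (hx : x ∈ gridPoints n 3)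
    (hy : y ∈ gridPoints n 3) : ReflTransGen (SeamArc n k) x y := by
  have hqb : SeamArc n k (k + 1, 1) (k + 1, 0) := by rw [mk_iff]; omega
  have hba₀ : SeamArc n k (k + 1, 0) (k + 2, 0) := by rw [mk_iff]; omega
  have ha₀a₁ : SeamArc n k (k + 2, 0) (k + 2, 1) := by rw [mk_iff]; omega
  have ha₁q : SeamArc n k (k + 2, 1) (k + 1, 1) := by rw [mk_iff]; omega
  have hqp : SeamArc n k (k + 1, 1) (k + 1, 2) := by rw [mk_iff]; omega
  have hpl₂ : SeamArc n k (k + 1, 2) (k, 2) := by rw [mk_iff]; omega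
  have hl₂l₁ : SeamArc n k (k, 2) (k, 1) := by rw [mk_iff]; omega
  have hl₁q : SeamArc n k (k, 1) (k + 1, 1) := by rw [mk_iff]; omega
  have hgrid := gridPoints_subset (dConvex_setOf_mutuallyReachable (k + 1, 1)) hk hn
    ⟨.refl, .refl⟩ ⟨.single hqp, .head hpl₂ (.head hl₂l₁ (.single hl₁q))⟩
    ⟨.head hqb (.head hba₀ (.single ha₀a₁)), .single ha₁q⟩
  exact (hgrid hx).2.trans (hgrid hy).1

theorem exit_leftPart (hx : x ∈ leftPart k) (hy : y ∉ leftPart k) (h : SeamArc n k x y) :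
    (x = (k, 0) ∨ x = (k + 1, 1)) ∧ y = (k + 1, 0) := by
  obtain ⟨i, r⟩ := x
  obtain ⟨i', r'⟩ := y
  rw [mk_iff] at h
  rw [mem_leftPart_mk] at hx hy
  simp only [Prod.mk.injEq]
  omega

theorem enter_leftPart (hx : x ∉ leftPart k) (hy : y ∈ leftPart k) (h : SeamArc n k x y) :
    (x = (k + 2, 1) ∨ x = (k + 2, 2)) ∧ (y = (k + 1, 1) ∨ y = (k + 1, 2)) := by
  obtain ⟨i, r⟩ := x
  obtain ⟨i', r'⟩ := y
  rw [mk_iff] at h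
  rw [mem_leftPart_mk] at hx hy
  simp only [Prod.mk.injEq]
  omega

theorem dConvex_leftPart (hn : k + 3 ≤ n) : DConvex (SeamArc n k) (leftPart k) := by
  have hl₀l₁ : SeamArc n k (k, 0) (k, 1) := by rw [mk_iff]; omega
  have hl₁q : SeamArc n k (k, 1) (k + 1, 1) := by rw [mk_iff]; omega
  have hqp : SeamArc n k (k + 1, 1) (k + 1, 2) := by rw [mk_iff]; omega
  have hl₀q : HasDirWalk (SeamArc n k) 2 (k, 0) (k + 1, 1) :=
    hasDirWalk_succ_iff.2 ⟨_, hl₀l₁, hasDirWalk_one_iff.2 hl₁q⟩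
  -- Outside `leftPart k`, one reaches `b` at time 1, `a₀` at time 2, the rest at time 3 or later.
  refine dConvex_of_excursion_bound ⟨(k + 1, 1), by simp [leftPart]⟩
    (fun x => if x = (k + 1, 0) then 1 else if x = (k + 2, 0) then 2 else 3) ?_ ?_ ?_
  · intro x hx t ht h
    rw [if_pos (h.exit_leftPart hx ht).2]
  · rintro s - ⟨i, r⟩ ht h
    by_cases hs : s = (k + 1, 0)
    · rw [hs, mk_iff] at h
      rw [mem_leftPart_mk] at ht
      obtain ⟨rfl, rfl⟩ : i = k + 2 ∧ r = 0 := by omega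
      simp [hs]
    · rw [if_neg hs]
      split_ifs <;> omega
  · intro x hx s hs hxs t ht y hy hty
    obtain ⟨hx', -⟩ := hxs.exit_leftPart hx hs
    obtain ⟨ht', hy'⟩ := hty.enter_leftPart ht hy
    rw [if_neg (by rcases ht' with rfl | rfl <;> simp),
      if_neg (by rcases ht' with rfl | rfl <;> simp)]
    rcases hx' with rfl | rfl <;> rcases hy' with rfl | rfl
    · exact ⟨2, by simp, hl₀q⟩
    · exact ⟨3, le_rfl, hasDirWalk_succ_iff'.2 ⟨_, hl₀q, hqp⟩⟩
    · exact ⟨0, by simp, hasDirWalk_zero_iff.2 rfl⟩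
    · exact ⟨1, by simp, hasDirWalk_one_iff.2 hqp⟩

theorem face_succ_zero_subset_of_mem (hC : DConvex (SeamArc n k) C) (hn : k + 3 ≤ n)
    (hout : ∀ x ∈ C, ∃ z ∈ C, SeamArc n k x z) (hin : ∀ x ∈ C, ∃ z ∈ C, SeamArc n k z x)
    (hx : x ∈ C) (hx' : x = (k + 1, 0) ∨ x = (k + 2, 0) ∨ x = (k + 2, 1)) :
    face (k + 1) 0 ⊆ C := by
  have ha₀ : (k + 2, 0) ∈ C := by
    rcases hx' with rfl | rfl | rfl
    · obtain ⟨⟨i, r⟩, hz, hxz⟩ := hout _ hx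
      rw [mk_iff] at hxz
      obtain ⟨rfl, rfl⟩ : i = k + 2 ∧ r = 0 := by omega
      exact hz
    · exact hx
    · obtain ⟨⟨i, r⟩, hz, hzx⟩ := hin _ hx
      rw [mk_iff] at hzx
      obtain ⟨rfl, rfl⟩ : i = k + 2 ∧ r = 0 := by omega
      exact hz
  obtain ⟨⟨i, r⟩, ha₁, ha₀a₁⟩ := hout _ ha₀
  rw [mk_iff] at ha₀a₁
  obtain ⟨rfl, rfl⟩ : i = k + 2 ∧ r = 1 := by omega
  refine face_subset hC (by omega) two_pos ?_ ⟨(k + 2, 0), ⟨ha₀, ?_⟩, (k + 2, 1), ⟨ha₁, ?_⟩, ?_⟩ <;>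
    simp [cyclicFaces, face]

theorem face_succ_zero_subset_of_right_mem (hC : DConvex (SeamArc n k) C)
    (hout : ∀ x ∈ C, ∃ z ∈ C, SeamArc n k x z) (hin : ∀ x ∈ C, ∃ z ∈ C, SeamArc n k z x)
    (hx : x ∈ C) (hkx : k + 3 ≤ x.1) : face (k + 1) 0 ⊆ C := by
  obtain ⟨z, hz, hzx⟩ := hin x hx
  have hn : k + 4 ≤ n := Nat.succ_le_of_lt (hkx.trans_lt hzx.2.1.1)
  have ha₁ (h : (k + 2, 1) ∈ C) : face (k + 1) 0 ⊆ C :=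
    face_succ_zero_subset_of_mem hC (by omega) hout hin h (.inr (.inr rfl))
  have hstrip {y z : ℕ × ℕ} (hn : k + 5 ≤ n) (hy : y ∈ C) (hz : z ∈ C) (hzy : SeamArc n k z y)
      (hky : k + 3 ≤ y.1) (hkz : k + 3 ≤ z.1) : face (k + 1) 0 ⊆ C := by
    have hright := right_subset hC hn hz hy hzy hkz hky
    have hc : face (k + 2) 0 ⊆ C := by
      refine face_subset hC (by omega) two_pos ?_
        ⟨(k + 3, 0), ⟨hright ?_, ?_⟩, (k + 3, 1), ⟨hright ?_, ?_⟩, ?_⟩ <;>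
        simp [cyclicFaces, face] <;> omega
    exact ha₁ (hc (by simp [face]))
  have hc₁ (h : (k + 3, 1) ∈ C) : face (k + 1) 0 ⊆ C := by
    obtain ⟨⟨i, r⟩, hz, hzc⟩ := hin _ h
    have hz' := mk_iff.1 hzc
    obtain ⟨rfl, rfl⟩ | ⟨hn, hi⟩ : (i = k + 2 ∧ r = 1) ∨ k + 5 ≤ n ∧ k + 3 ≤ i := by omega
    · exact ha₁ hz
    · exact hstrip hn h hz hzc le_rfl hi
  obtain ⟨i, r⟩ := x
  obtain ⟨i', r'⟩ := z
  have hzx' := mk_iff.1 hzx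
  simp only at hkx
  obtain ⟨rfl, rfl⟩ | ⟨rfl, rfl⟩ | ⟨hn, hi⟩ :
      (i' = k + 2 ∧ r' = 1) ∨ (i' = k + 3 ∧ r' = 1) ∨ k + 5 ≤ n ∧ k + 3 ≤ i' := by omega
  · exact ha₁ hz
  · exact hc₁ hz
  · exact hstrip hn hx hz hzx hkx hi

theorem face_succ_zero_subset_of_not_subset (hC : DConvex (SeamArc n k) C) (hn : k + 3 ≤ n)
    (hout : ∀ x ∈ C, ∃ z ∈ C, SeamArc n k x z) (hin : ∀ x ∈ C, ∃ z ∈ C, SeamArc n k z x)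
    (hCL : ¬ C ⊆ leftPart k) : face (k + 1) 0 ⊆ C := by
  obtain ⟨⟨i, r⟩, hx, hxL⟩ := Set.not_subset.1 hCL
  obtain ⟨⟨i', r'⟩, hz, hzx⟩ := hin _ hx
  rw [mem_leftPart_mk] at hxL
  rw [mk_iff] at hzx
  rcases (by omega : k + 3 ≤ i ∨ i = k + 1 ∧ r = 0 ∨ i = k + 2 ∧ r = 0 ∨ i = k + 2 ∧ r = 1 ∨
    i = k + 2 ∧ r = 2) with h | ⟨rfl, rfl⟩ | ⟨rfl, rfl⟩ | ⟨rfl, rfl⟩ | ⟨rfl, rfl⟩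
  · exact face_succ_zero_subset_of_right_mem hC hout hin hx h
  · exact face_succ_zero_subset_of_mem hC hn hout hin hx (.inl rfl)
  · exact face_succ_zero_subset_of_mem hC hn hout hin hx (.inr (.inl rfl))
  · exact face_succ_zero_subset_of_mem hC hn hout hin hx (.inr (.inr rfl))
  · obtain ⟨rfl, rfl⟩ | ⟨rfl, rfl⟩ : (i' = k + 2 ∧ r' = 1) ∨ (i' = k + 3 ∧ r' = 2) := by omega
    · exact face_succ_zero_subset_of_mem hC hn hout hin hz (.inr (.inr rfl))
    · exact face_succ_zero_subset_of_right_mem hC hout hin hz le_rfl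

theorem p_mem_of_q_mem_of_c₂_mem (hC : DConvex (SeamArc n k) C) (hn : k + 4 ≤ n)
    (hq : (k + 1, 1) ∈ C) (hc₂ : (k + 3, 2) ∈ C) : (k + 1, 2) ∈ C := by
  have hp : HasDirWalk (SeamArc n k) 2 (k + 3, 2) (k + 1, 2) := by
    refine hasDirWalk_succ_iff.2 ⟨(k + 2, 2), ?_, hasDirWalk_one_iff.2 ?_⟩ <;>
      rw [mk_iff] <;> omega
  have hl : HasDirWalk (SeamArc n k) 3 (k + 1, 2) (k + 1, 1) := by
    refine hasDirWalk_succ_iff.2 ⟨(k, 2), ?_, hasDirWalk_succ_iff.2 ⟨(k, 1), ?_,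
      hasDirWalk_one_iff.2 ?_⟩⟩ <;> rw [mk_iff] <;> omega
  refine hC.mem_of_hasDirWalk hc₂ hq hp hl fun m hm => ?_
  have hpar := hm.even_add (c := fun x => x.1 + x.2) (fun _ _ => GridArc.odd_add)
  obtain rfl | rfl | hm' : m = 1 ∨ m = 3 ∨ 2 + 3 ≤ m := by grind
  · rw [hasDirWalk_one_iff, mk_iff] at hm
    omega
  · obtain ⟨⟨i, r⟩, hc₂x, hx⟩ := hasDirWalk_succ_iff.1 hm
    obtain ⟨⟨i', r'⟩, hxy, hy⟩ := hasDirWalk_succ_iff.1 hx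
    rw [hasDirWalk_one_iff, mk_iff] at hy
    rw [mk_iff] at hc₂x hxy
    have hy : i' = k + 2 ∧ r' = 1 ∨ i' = k ∧ r' = 1 := by omega
    omega
  · exact hm'

theorem subset_Icc_prod_of_p_notMem (hC : DConvex (SeamArc n k) C) (hk : 0 < k) (hn : k + 3 ≤ n)
    (hout : ∀ x ∈ C, ∃ z ∈ C, SeamArc n k x z) (hin : ∀ x ∈ C, ∃ z ∈ C, SeamArc n k z x)
    (hq : (k + 1, 1) ∈ C) (hp : (k + 1, 2) ∉ C) :
    C ⊆ Set.Icc (k + 1) (k + 3) ×ˢ Set.Iio 2 := by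
  rintro ⟨i, r⟩ hx
  obtain ⟨⟨i', r'⟩, hz, hzx⟩ := hin _ hx
  have hzx' := mk_iff.1 hzx
  have hleft : ¬ (i ≤ k ∧ i' ≤ k) := fun ⟨hi, hi'⟩ => by
    have hl := left_subset hC hk (by omega) hz hx hzx hi' hi
    have hf : face k 1 ⊆ C := by
      refine face_subset hC (by omega) one_lt_two ?_
        ⟨(k, 1), ⟨hl ?_, ?_⟩, (k, 2), ⟨hl ?_, ?_⟩, ?_⟩ <;> simp [cyclicFaces, face]
    exact hp (hf (by simp [face]))
  have hc₂ : (k + 3, 2) ∉ C := fun h => by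
    obtain ⟨z, -, hzc⟩ := hin _ h
    exact hp (p_mem_of_q_mem_of_c₂_mem hC (Nat.succ_le_of_lt hzc.2.1.1) hq h)
  have hright : ¬ (k + 5 ≤ n ∧ k + 3 ≤ i ∧ k + 3 ≤ i') := fun ⟨hn, hi, hi'⟩ =>
    hc₂ (right_subset hC hn hz hx hzx hi' hi ⟨⟨le_rfl, by omega⟩, by simp⟩)
  have ha₂ : (k + 2, 2) ∉ C := fun h => by
    obtain ⟨⟨i, r⟩, hz, hxz⟩ := hout _ h
    rw [mk_iff] at hxz
    obtain ⟨rfl, rfl⟩ : i = k + 1 ∧ r = 2 := by omega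
    exact hp hz
  have htop : r ≠ 2 ∨ i ≤ k ∨ k + 4 ≤ i := by
    by_contra! h
    obtain ⟨rfl, hi, hi'⟩ := h
    obtain rfl | rfl | rfl : i = k + 1 ∨ i = k + 2 ∨ i = k + 3 := by omega
    exacts [hp hx, ha₂ hx, hc₂ hx]
  have hz_ne : ¬ (i' = k + 1 ∧ r' = 2) := fun ⟨hi, hr⟩ => hp (hi ▸ hr ▸ hz)
  exact ⟨⟨by omega, by omega⟩, Set.mem_Iio.2 (by omega)⟩

theorem subset_leftPart_or_ncard_le (hC : DConvex (SeamArc n k) C) (hk : 0 < k) (hn : k + 3 ≤ n)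
    (hCn : C ⊂ gridPoints n 3) : C ⊆ leftPart k ∨ C.ncard ≤ 6 := by
  rcases C.subsingleton_or_nontrivial with hC₁ | hC₂
  · have hC1 : C.ncard ≤ 1 := (Set.ncard_le_one hC₁.finite).2 fun _ hx _ hy => hC₁ hx hy
    exact .inr (hC1.trans (by simp))
  have hout (x : ℕ × ℕ) (hx : x ∈ C) : ∃ z ∈ C, SeamArc n k x z := by
    obtain ⟨y, hy, hxy⟩ := hC₂.exists_ne x
    exact hC.exists_mem_arc_from hx hy hxy.symm
      (reflTransGen hk hn (hCn.subset hx) (hCn.subset hy))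
  have hin (x : ℕ × ℕ) (hx : x ∈ C) : ∃ z ∈ C, SeamArc n k z x := by
    obtain ⟨y, hy, hyx⟩ := hC₂.exists_ne x
    exact hC.exists_mem_arc_to hy hx hyx
      (reflTransGen hk hn (hCn.subset hy) (hCn.subset hx))
  by_cases hCL : C ⊆ leftPart k
  · exact .inl hCL
  have hface := face_succ_zero_subset_of_not_subset hC hn hout hin hCL
  have hq : (k + 1, 1) ∈ C := hface (by simp [face])
  have hp : (k + 1, 2) ∉ C := fun hp =>
    hCn.not_subset (gridPoints_subset hC hk hn hq hp (hface (by simp [face])))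
  have hsub := subset_Icc_prod_of_p_notMem hC hk hn hout hin hq hp
  right
  calc C.ncard ≤ (Set.Icc (k + 1) (k + 3) ×ˢ Set.Iio 2).ncard :=
        Set.ncard_le_ncard hsub ((Set.finite_Icc _ _).prod (Set.finite_Iio _))
    _ = 6 := by
      rw [Set.ncard_prod]
      simp [Set.ncard_eq_toFinset_card']

end SeamArc

/-- Realizable values `3j + 2` in the strong convexity spectrum of `P_n □ P_3`. -/
theorem three_j_add_two_mem_strongConvexitySpectrum_grid_n3 (n : ℕ) (hn : 2 ≤ n)
    (j : ℕ) (hjl : 2 ≤ j) (hju : j ≤ n - 2) :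
    3 * j + 2 ∈ strongConvexitySpectrum (gridGraph n 3) := by
  obtain ⟨k, rfl⟩ := Nat.exists_eq_add_of_le' (one_le_two.trans hjl)
  have hk : 0 < k := by omega
  have hkn : k + 3 ≤ n := by omega
  have hrange := range_prodMap_finVal (n := n) (m := 3)
  rw [← ncard_leftPart]
  refine ncard_mem_strongConvexitySpectrum (e := Prod.map Fin.val Fin.val) (B := SeamArc n k)
    (Fin.val_injective.prodMap Fin.val_injective) ?_ isOrientation_gridArc ?_
    (SeamArc.dConvex_leftPart hkn) ?_ ?_ <;> rw [hrange]
  · exact fun _ _ h => h.2.1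
  · exact fun x hx y hy => SeamArc.reflTransGen hk hkn hx hy
  · exact leftPart_ssubset_gridPoints hkn
  · intro C hCn hC
    rcases SeamArc.subset_leftPart_or_ncard_le hC hk hkn hCn with hCL | hC6
    · exact Set.ncard_le_ncard hCL finite_leftPart
    · rw [ncard_leftPart]
      omega
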